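/- Let Ω ⊆ ℝ² be an open simply connected set and let z ∈ C²(Ω). Set W = √(1 + z_x² + z_y²). Then z satisfies the minimal surface equation z_xx(1+z_y²) + z_yy(1+z_x²) − 2 z_x z_y z_xy = 0 on Ω if and only if there exist functions a, b, c ∈ C²(Ω) such that on Ω: ∇a = (W⁻¹ z_x z_y, W⁻¹(1+z_y²)), ∇b = (−W⁻¹(1+z_x²), −W⁻¹ z_x z_y), and ∇c = (−W⁻¹ z_y, W⁻¹ z_x). (These three gradient conditions express that the vector-valued 1-form N ∧ dX, for the nonparametric surface X(x,y) = (x,y,z(x,y)) with unit normal N = W⁻¹(−z_x, −z_y, 1), is a total differential −dX*.) -/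

import Mathlib

/-!
The prescribed differentials `da`, `db`, `dc` are the components of `-N ∧ dX`, and
`d(-N ∧ dX) = M W⁻² N dx ∧ dy` with `M` the left-hand side of the minimal surface equation. Since
`N` has no zeros these 1-forms are closed iff `M = 0`, and the third one already forces this,
because its coefficient `M W⁻³` vanishes only where `M` does.

On a simply connected open set closed 1-forms are exact: the Poincaré lemma gives primitives on
balls, which differ by locally constant functions on overlaps. These differences are the transition
functions of a bundle with discrete fibre, i.e. of a covering space, and lifting the identity
provides a section, by which the local primitives can be corrected to agree.
-/

open Real Filter Set

/-- Partial derivative in the `x`-direction. -/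
noncomputable def pdx (f : ℝ × ℝ → ℝ) (p : ℝ × ℝ) : ℝ := fderiv ℝ f p (1, 0)

/-- Partial derivative in the `y`-direction. -/
noncomputable def pdy (f : ℝ × ℝ → ℝ) (p : ℝ × ℝ) : ℝ := fderiv ℝ f p (0, 1)

/-- The area element `W = √(1 + z_x² + z_y²)`. -/
noncomputable def Wel (z : ℝ × ℝ → ℝ) (p : ℝ × ℝ) : ℝ :=
  Real.sqrt (1 + (pdx z p) ^ 2 + (pdy z p) ^ 2)

open scoped Topology

section Gluing

variable {ι X : Type*} [TopologicalSpace X]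

theorem eventuallyConst_nhds_iff_continuousAt {A : Type*} [TopologicalSpace A] [DiscreteTopology A]
    {f : X → A} {x : X} : EventuallyConst f (𝓝 x) ↔ ContinuousAt f x := by
  refine ⟨fun h => ?_, fun h => EventuallyConst.of_tendsto (x := f x) ?_⟩
  · have : Nonempty A := ⟨f x⟩
    obtain ⟨c, hc⟩ := eventuallyConst_iff_exists_eventuallyEq.1 h
    exact continuousAt_const.congr hc.symm
  · rwa [← nhds_discrete]

/-- The bundle whose transition functions are the translations by `f i - f j`. If these are locally
constant it encodes glueing the `f i` up to locally constant functions: in the chart `i`, a section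
is the difference `g - f i` for a globally defined `g`. -/
def translationBundleCore {A : Type*} [AddGroup A] [TopologicalSpace A] [ContinuousAdd A]
    (U : ι → Set X) (hU : ∀ i, IsOpen (U i)) (indexAt : X → ι) (hindexAt : ∀ x, x ∈ U (indexAt x))
    (f : ι → X → A) (hf : ∀ i j, ContinuousOn (f i - f j) (U i ∩ U j)) :
    FiberBundleCore ι X A where
  baseSet := U
  isOpen_baseSet := hU
  indexAt := indexAt
  mem_baseSet_at := hindexAt
  coordChange i j x v := v + (f i - f j) x
  coordChange_self i x _ v := by simp only [sub_self, Pi.zero_apply, add_zero]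
  continuousOn_coordChange i j :=
    continuousOn_snd.add ((hf i j).comp continuousOn_fst fun _ hp => hp.1)
  coordChange_comp i j k x _ v := by
    simp only [Pi.sub_apply, add_assoc, sub_add_sub_cancel]

variable [SimplyConnectedSpace X] [LocallyPathConnectedSpace X]

theorem exists_compatible_sections {F : Type*} [TopologicalSpace F] [DiscreteTopology F]
    [Nonempty F] (Z : FiberBundleCore ι X F) :
    ∃ s : ι → X → F, (∀ i, ContinuousOn (s i) (Z.baseSet i)) ∧
      ∀ i j, ∀ x ∈ Z.baseSet i ∩ Z.baseSet j, Z.coordChange i j x (s i x) = s j x := by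
  have hcov : IsCoveringMap (Bundle.TotalSpace.proj : Z.TotalSpace → X) :=
    FiberBundle.isCoveringMap
  obtain ⟨x₀⟩ : Nonempty X := inferInstance
  obtain ⟨v₀⟩ : Nonempty F := inferInstance
  obtain ⟨σ, ⟨-, hσ⟩, -⟩ := hcov.existsUnique_continuousMap_lifts (ContinuousMap.id X) x₀
    (⟨x₀, v₀⟩ : Z.TotalSpace) rfl
  have hproj (x : X) : (σ x).proj = x := congrFun hσ x
  refine ⟨fun i x => (Z.localTriv i (σ x)).2, fun i x hx => ?_, fun i j x hx => ?_⟩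
  · have hsource : σ x ∈ (Z.localTriv i).source := by rwa [Z.mem_localTriv_source, hproj]
    exact (continuousAt_snd.comp (((Z.localTriv i).continuousAt hsource).comp
      σ.continuous.continuousAt)).continuousWithinAt
  · have hindex := Z.mem_baseSet_at x
    simp only [Z.localTriv_apply, hproj]
    exact Z.coordChange_comp _ i j x ⟨⟨hindex, hx.1⟩, hx.2⟩ _

theorem exists_forall_eventuallyConst_sub {A : Type*} [AddGroup A] {U : ι → Set X}
    (hU : ∀ i, IsOpen (U i)) (hcover : ⋃ i, U i = univ) {f : ι → X → A}
    (hf : ∀ i j, ∀ x ∈ U i ∩ U j, EventuallyConst (f i - f j) (𝓝 x)) :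
    ∃ g : X → A, ∀ i, ∀ x ∈ U i, EventuallyConst (g - f i) (𝓝 x) := by
  let _ : TopologicalSpace A := ⊥
  have : DiscreteTopology A := ⟨rfl⟩
  choose indexAt hindexAt using iUnion_eq_univ_iff.1 hcover
  obtain ⟨s, hs, hcompat⟩ := exists_compatible_sections <|
    translationBundleCore U hU indexAt hindexAt f fun i j x hx =>
      (eventuallyConst_nhds_iff_continuousAt.1 (hf i j x hx)).continuousWithinAt
  refine ⟨fun x => s (indexAt x) x + f (indexAt x) x, fun i x hx => ?_⟩
  have hglobal : EqOn (s i) ((fun y => s (indexAt y) y + f (indexAt y) y) - f i) (U i) :=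
    fun y hy => by
      rw [← hcompat (indexAt y) i y ⟨hindexAt y, hy⟩]
      exact (add_sub_assoc _ _ _).symm
  exact (eventuallyConst_nhds_iff_continuousAt.2 ((hs i).continuousAt ((hU i).mem_nhds hx))).congr
    (hglobal.eventuallyEq_of_mem ((hU i).mem_nhds hx))

end Gluing

section Primitive

variable {E F : Type*} [NormedAddCommGroup E] [NormedSpace ℝ E] [NormedAddCommGroup F]
  [NormedSpace ℝ F]

theorem eventuallyConst_of_eventually_hasFDerivAt_zero {f : E → F} {x : E}
    (hf : ∀ᶠ y in 𝓝 x, HasFDerivAt f (0 : E →L[ℝ] F) y) : EventuallyConst f (𝓝 x) := by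
  obtain ⟨r, hr, hball⟩ := Metric.eventually_nhds_iff_ball.1 hf
  refine eventuallyConst_iff_exists_eventuallyEq.2
    ⟨f x, eventually_of_mem (Metric.ball_mem_nhds x hr) fun y hy => ?_⟩
  refine (convex_ball x r).is_const_of_fderivWithin_eq_zero (𝕜 := ℝ)
    (fun w hw => (hball w hw).differentiableAt.differentiableWithinAt) (fun w hw => ?_) hy
    (Metric.mem_ball_self hr)
  rw [fderivWithin_of_isOpen Metric.isOpen_ball hw, (hball w hw).fderiv]

variable {Ω : Set E} [SimplyConnectedSpace Ω] {ω : E → E →L[ℝ] F}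

theorem exists_hasFDerivAt_of_locally_exact (hΩ : IsOpen Ω)
    (hω : ∀ x ∈ Ω, ∃ f : E → F, ∀ᶠ y in 𝓝 x, HasFDerivAt f (ω y) y) :
    ∃ f : E → F, ∀ x ∈ Ω, HasFDerivAt f (ω x) x := by
  have := hΩ.locallyPathConnectedSpace
  choose f hf using fun x : Ω => hω x x.2
  choose U hfU hU hmem using fun x => eventually_nhds_iff.1 (hf x)
  have hdiff (i j x : Ω) (hx : (x : E) ∈ U i ∩ U j) : EventuallyConst (f i - f j) (𝓝 (x : E)) :=
    eventuallyConst_of_eventually_hasFDerivAt_zero <| by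
      filter_upwards [((hU i).inter (hU j)).mem_nhds hx] with y hy
      simpa only [sub_self] using (hfU i y hy.1).sub (hfU j y hy.2)
  obtain ⟨g, hg⟩ := exists_forall_eventuallyConst_sub (f := fun i => f i ∘ ((↑) : Ω → E))
    (fun i => (hU i).preimage continuous_subtype_val)
    (iUnion_eq_univ_iff.2 fun x => ⟨x, hmem x⟩)
    fun i j x hx => (hdiff i j x hx).comp_tendsto continuous_subtype_val.continuousAt
  obtain ⟨G, rfl⟩ : ∃ G : E → F, G ∘ ((↑) : Ω → E) = g :=
    ⟨Function.extend Subtype.val g 0, funext fun x => Subtype.val_injective.extend_apply g 0 x⟩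
  refine ⟨G, fun x hx => ?_⟩
  obtain ⟨c, hc⟩ := eventuallyConst_iff_exists_eventuallyEq.1 (hg ⟨x, hx⟩ ⟨x, hx⟩ (hmem ⟨x, hx⟩))
  have hG : G =ᶠ[𝓝 x] fun y => c + f ⟨x, hx⟩ y := by
    rw [EventuallyEq, ← map_nhds_subtype_coe_eq_nhds hx (hΩ.mem_nhds hx), eventually_map]
    exact hc.mono fun y hy => sub_eq_iff_eq_add.1 hy
  exact ((hf ⟨x, hx⟩).self_of_nhds.const_add c).congr_of_eventuallyEq hG

theorem exists_hasFDerivAt_of_fderiv_symmetric [CompleteSpace F] (hΩ : IsOpen Ω)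
    (hω : DifferentiableOn ℝ ω Ω)
    (hsymm : ∀ x ∈ Ω, ∀ u v, fderiv ℝ ω x u v = fderiv ℝ ω x v u) :
    ∃ f : E → F, ∀ x ∈ Ω, HasFDerivAt f (ω x) x := by
  refine exists_hasFDerivAt_of_locally_exact hΩ fun x hx => ?_
  obtain ⟨r, hr, hball⟩ := Metric.isOpen_iff.1 hΩ x hx
  obtain ⟨f, hf⟩ := (convex_ball x r).exists_forall_hasFDerivAt_of_fderiv_symmetric
    Metric.isOpen_ball (hω.mono hball) fun y hy => hsymm y (hball hy)
  exact ⟨f, eventually_of_mem (Metric.ball_mem_nhds x hr) hf⟩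

end Primitive

section PlanarForms

variable {f g P Q P' Q' : ℝ × ℝ → ℝ} {p : ℝ × ℝ} {m n : WithTop ℕ∞}

theorem fderiv_apply_eq_pdx_add_pdy (f : ℝ × ℝ → ℝ) (p v : ℝ × ℝ) :
    fderiv ℝ f p v = v.1 * pdx f p + v.2 * pdy f p := by
  have hv : v = v.1 • ((1, 0) : ℝ × ℝ) + v.2 • ((0, 1) : ℝ × ℝ) := by ext <;> simp
  conv_lhs => rw [hv]
  simp only [pdx, pdy, map_add, map_smul, smul_eq_mul]

theorem pdx_fun_neg : pdx (fun q => -f q) p = -pdx f p := by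
  rw [pdx, fderiv_fun_neg]
  rfl

theorem pdy_fun_neg : pdy (fun q => -f q) p = -pdy f p := by
  rw [pdy, fderiv_fun_neg]
  rfl

theorem pdx_fun_mul (hf : DifferentiableAt ℝ f p) (hg : DifferentiableAt ℝ g p) :
    pdx (fun q => f q * g q) p = f p * pdx g p + g p * pdx f p := by
  rw [pdx, fderiv_fun_mul hf hg]
  rfl

theorem pdy_fun_mul (hf : DifferentiableAt ℝ f p) (hg : DifferentiableAt ℝ g p) :
    pdy (fun q => f q * g q) p = f p * pdy g p + g p * pdy f p := by
  rw [pdy, fderiv_fun_mul hf hg]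
  rfl

theorem pdx_one_add_sq (hf : DifferentiableAt ℝ f p) :
    pdx (fun q => 1 + f q ^ 2) p = 2 * f p * pdx f p := by
  simp [pdx, fderiv_fun_pow 2 hf]

theorem pdy_one_add_sq (hf : DifferentiableAt ℝ f p) :
    pdy (fun q => 1 + f q ^ 2) p = 2 * f p * pdy f p := by
  simp [pdy, fderiv_fun_pow 2 hf]

theorem contDiffAt_pdx (hf : ContDiffAt ℝ n f p) (hmn : m + 1 ≤ n) : ContDiffAt ℝ m (pdx f) p :=
  (hf.fderiv_right hmn).clm_apply contDiffAt_const

theorem contDiffAt_pdy (hf : ContDiffAt ℝ n f p) (hmn : m + 1 ≤ n) : ContDiffAt ℝ m (pdy f) p :=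
  (hf.fderiv_right hmn).clm_apply contDiffAt_const

theorem contDiffOn_pdx {Ω : Set (ℝ × ℝ)} (hΩ : IsOpen Ω) (hf : ContDiffOn ℝ n f Ω)
    (hmn : m + 1 ≤ n) : ContDiffOn ℝ m (pdx f) Ω := fun _ hp =>
  (contDiffAt_pdx (hf.contDiffAt (hΩ.mem_nhds hp)) hmn).contDiffWithinAt

theorem contDiffOn_pdy {Ω : Set (ℝ × ℝ)} (hΩ : IsOpen Ω) (hf : ContDiffOn ℝ n f Ω)
    (hmn : m + 1 ≤ n) : ContDiffOn ℝ m (pdy f) Ω := fun _ hp =>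
  (contDiffAt_pdy (hf.contDiffAt (hΩ.mem_nhds hp)) hmn).contDiffWithinAt

theorem differentiableAt_pdx (hf : ContDiffAt ℝ 2 f p) : DifferentiableAt ℝ (pdx f) p :=
  (contDiffAt_pdx hf one_add_one_eq_two.le).differentiableAt one_ne_zero

theorem differentiableAt_pdy (hf : ContDiffAt ℝ 2 f p) : DifferentiableAt ℝ (pdy f) p :=
  (contDiffAt_pdy hf one_add_one_eq_two.le).differentiableAt one_ne_zero

theorem pdx_pdy_eq_pdy_pdx (hf : ContDiffAt ℝ 2 f p) : pdx (pdy f) p = pdy (pdx f) p := by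
  have hdiff : DifferentiableAt ℝ (fderiv ℝ f) p :=
    (hf.fderiv_right (m := 1) one_add_one_eq_two.le).differentiableAt one_ne_zero
  have hsymm : IsSymmSndFDerivAt ℝ f p := hf.isSymmSndFDerivAt (by simp)
  have hsecond (v w : ℝ × ℝ) :
      fderiv ℝ (fun q => fderiv ℝ f q v) p w = fderiv ℝ (fderiv ℝ f) p w v := by
    simp [fderiv_clm_apply hdiff (differentiableAt_const v)]
  exact (hsecond _ _).trans ((hsymm.eq _ _).trans (hsecond _ _).symm)

/-- The 1-form `P dx + Q dy` on the plane, encoded as a field of continuous linear functionals. -/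
noncomputable def planarForm (P Q : ℝ × ℝ → ℝ) (p : ℝ × ℝ) : ℝ × ℝ →L[ℝ] ℝ :=
  P p • ContinuousLinearMap.fst ℝ ℝ ℝ + Q p • ContinuousLinearMap.snd ℝ ℝ ℝ

/-- The scalar curl `Q_x - P_y` of `(P, Q)`, i.e. the coefficient of `dx ∧ dy` in
`d(P dx + Q dy)`. -/
noncomputable def planarCurl (P Q : ℝ × ℝ → ℝ) (p : ℝ × ℝ) : ℝ :=
  pdx Q p - pdy P p

theorem planarCurl_congr (hP : P =ᶠ[𝓝 p] P') (hQ : Q =ᶠ[𝓝 p] Q') :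
    planarCurl P Q p = planarCurl P' Q' p := by
  simp only [planarCurl, pdx, pdy, hP.fderiv_eq, hQ.fderiv_eq]

theorem planarCurl_pdx_pdy (hf : ContDiffAt ℝ 2 f p) : planarCurl (pdx f) (pdy f) p = 0 :=
  sub_eq_zero.2 (pdx_pdy_eq_pdy_pdx hf)

theorem planarCurl_fun_mul (hf : DifferentiableAt ℝ f p) (hP : DifferentiableAt ℝ P p)
    (hQ : DifferentiableAt ℝ Q p) :
    planarCurl (fun q => f q * P q) (fun q => f q * Q q) p =
      f p * planarCurl P Q p + (pdx f p * Q p - pdy f p * P p) := by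
  rw [planarCurl, planarCurl, pdx_fun_mul hf hQ, pdy_fun_mul hf hP]
  ring

theorem fderiv_planarForm_apply_sub (hP : DifferentiableAt ℝ P p) (hQ : DifferentiableAt ℝ Q p)
    (u v : ℝ × ℝ) :
    fderiv ℝ (planarForm P Q) p u v - fderiv ℝ (planarForm P Q) p v u =
      planarCurl P Q p * (u.1 * v.2 - u.2 * v.1) := by
  have hform : HasFDerivAt (planarForm P Q) _ p :=
    (hP.hasFDerivAt.smul_const (ContinuousLinearMap.fst ℝ ℝ ℝ)).add
      (hQ.hasFDerivAt.smul_const (ContinuousLinearMap.snd ℝ ℝ ℝ))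
  have happly (u v : ℝ × ℝ) : fderiv ℝ (planarForm P Q) p u v =
      fderiv ℝ P p u * v.1 + fderiv ℝ Q p u * v.2 := by
    rw [hform.fderiv]
    rfl
  simp only [happly, fderiv_apply_eq_pdx_add_pdy, planarCurl]
  ring

theorem exists_contDiffOn_potential {Ω : Set (ℝ × ℝ)} [SimplyConnectedSpace Ω] (hΩ : IsOpen Ω)
    {n : ℕ∞} (hn : n ≠ 0) (hP : ContDiffOn ℝ n P Ω) (hQ : ContDiffOn ℝ n Q Ω)
    (hcurl : ∀ p ∈ Ω, planarCurl P Q p = 0) :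
    ∃ f : ℝ × ℝ → ℝ, ContDiffOn ℝ (n + 1) f Ω ∧ ∀ p ∈ Ω, pdx f p = P p ∧ pdy f p = Q p := by
  have hn' : (n : WithTop ℕ∞) ≠ 0 := by exact_mod_cast hn
  have hform : ContDiffOn ℝ n (planarForm P Q) Ω :=
    (hP.smul contDiffOn_const).add (hQ.smul contDiffOn_const)
  have hdiff {g : ℝ × ℝ → ℝ} (hg : ContDiffOn ℝ n g Ω) {p : ℝ × ℝ} (hp : p ∈ Ω) :
      DifferentiableAt ℝ g p := (hg.contDiffAt (hΩ.mem_nhds hp)).differentiableAt hn'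
  obtain ⟨f, hf⟩ := exists_hasFDerivAt_of_fderiv_symmetric hΩ (hform.differentiableOn hn')
    fun p hp u v => sub_eq_zero.1 <| by
      rw [fderiv_planarForm_apply_sub (hdiff hP hp) (hdiff hQ hp), hcurl p hp, zero_mul]
  have hfderiv : ∀ p ∈ Ω, fderiv ℝ f p = planarForm P Q p := fun p hp => (hf p hp).fderiv
  refine ⟨f, (contDiffOn_succ_iff_fderiv_of_isOpen hΩ).2
    ⟨fun p hp => (hf p hp).differentiableAt.differentiableWithinAt, by simp,
      hform.congr hfderiv⟩, fun p hp => ?_⟩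
  simp [pdx, pdy, hfderiv p hp, planarForm]

end PlanarForms

section MinimalSurface

variable {z : ℝ × ℝ → ℝ} {p : ℝ × ℝ}

/-- The left-hand side of the minimal surface equation, i.e. `2 W³` times the mean curvature of
the graph of `z`. -/
noncomputable def minimalSurfaceOperator (z : ℝ × ℝ → ℝ) (p : ℝ × ℝ) : ℝ :=
  pdx (pdx z) p * (1 + (pdy z p) ^ 2) + pdy (pdy z) p * (1 + (pdx z p) ^ 2)
    - 2 * pdx z p * pdy z p * pdy (pdx z) p

theorem Wel_pos (z : ℝ × ℝ → ℝ) (p : ℝ × ℝ) : 0 < Wel z p :=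
  Real.sqrt_pos.2 (by positivity)

theorem Wel_sq (z : ℝ × ℝ → ℝ) (p : ℝ × ℝ) : Wel z p ^ 2 = 1 + pdx z p ^ 2 + pdy z p ^ 2 :=
  Real.sq_sqrt (by positivity)

theorem contDiffOn_inv_Wel {n : WithTop ℕ∞} {s : Set (ℝ × ℝ)} (hzx : ContDiffOn ℝ n (pdx z) s)
    (hzy : ContDiffOn ℝ n (pdy z) s) : ContDiffOn ℝ n (fun q => (Wel z q)⁻¹) s :=
  (((contDiffOn_const.add (hzx.pow 2)).add (hzy.pow 2)).sqrt fun _ _ => by positivity).inv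
    fun p _ => (Wel_pos z p).ne'

theorem hasFDerivAt_inv_Wel (hzx : DifferentiableAt ℝ (pdx z) p)
    (hzy : DifferentiableAt ℝ (pdy z) p) :
    HasFDerivAt (fun q => (Wel z q)⁻¹) (-(Wel z p)⁻¹ ^ 3 •
      (pdx z p • fderiv ℝ (pdx z) p + pdy z p • fderiv ℝ (pdy z) p)) p := by
  have hsq : HasFDerivAt (fun q => 1 + pdx z q ^ 2 + pdy z q ^ 2) _ p :=
    ((hzx.hasFDerivAt.pow 2).const_add 1).add (hzy.hasFDerivAt.pow 2)
  have hinv : HasFDerivAt (fun q => (Wel z q)⁻¹) _ p :=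
    (hasDerivAt_inv (Wel_pos z p).ne').comp_hasFDerivAt p (hsq.sqrt (by positivity))
  refine hinv.congr_fderiv (ContinuousLinearMap.ext fun v => ?_)
  change -(Wel z p ^ 2)⁻¹ * (1 / (2 * Wel z p) * (2 • pdx z p ^ 1 * fderiv ℝ (pdx z) p v
    + 2 • pdy z p ^ 1 * fderiv ℝ (pdy z) p v)) = -(Wel z p)⁻¹ ^ 3 *
      (pdx z p * fderiv ℝ (pdx z) p v + pdy z p * fderiv ℝ (pdy z) p v)
  ring

theorem planarCurl_inv_Wel_mul {P Q : ℝ × ℝ → ℝ} (hz : ContDiffAt ℝ 2 z p)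
    (hP : DifferentiableAt ℝ P p) (hQ : DifferentiableAt ℝ Q p) :
    planarCurl (fun q => (Wel z q)⁻¹ * P q) (fun q => (Wel z q)⁻¹ * Q q) p =
      (Wel z p)⁻¹ ^ 3 * ((1 + pdx z p ^ 2 + pdy z p ^ 2) * planarCurl P Q p
        + P p * (pdx z p * pdy (pdx z) p + pdy z p * pdy (pdy z) p)
        - Q p * (pdx z p * pdx (pdx z) p + pdy z p * pdy (pdx z) p)) := by
  have hinv := hasFDerivAt_inv_Wel (differentiableAt_pdx hz) (differentiableAt_pdy hz)
  have hinv_x : pdx (fun q => (Wel z q)⁻¹) p =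
      -(Wel z p)⁻¹ ^ 3 * (pdx z p * pdx (pdx z) p + pdy z p * pdy (pdx z) p) := by
    rw [← pdx_pdy_eq_pdy_pdx hz, pdx, hinv.fderiv]
    rfl
  have hinv_y : pdy (fun q => (Wel z q)⁻¹) p =
      -(Wel z p)⁻¹ ^ 3 * (pdx z p * pdy (pdx z) p + pdy z p * pdy (pdy z) p) := by
    rw [pdy, hinv.fderiv]
    rfl
  have hWsq : (Wel z p)⁻¹ = (Wel z p)⁻¹ ^ 3 * (1 + pdx z p ^ 2 + pdy z p ^ 2) := by
    rw [← Wel_sq]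
    field [(Wel_pos z p).ne']
  rw [planarCurl_fun_mul hinv.differentiableAt hP hQ, hinv_x, hinv_y]
  linear_combination planarCurl P Q p * hWsq

theorem planarCurl_gradient_a (hz : ContDiffAt ℝ 2 z p) :
    planarCurl (fun q => (Wel z q)⁻¹ * pdx z q * pdy z q)
      (fun q => (Wel z q)⁻¹ * (1 + pdy z q ^ 2)) p =
    (Wel z p)⁻¹ ^ 3 * minimalSurfaceOperator z p * -pdx z p := by
  have hzx := differentiableAt_pdx hz
  have hzy := differentiableAt_pdy hz
  simp only [mul_assoc (Wel z _)⁻¹]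
  rw [planarCurl_inv_Wel_mul hz (hzx.fun_mul hzy) ((hzy.fun_pow 2).const_add 1), planarCurl,
    pdx_one_add_sq hzy, pdy_fun_mul hzx hzy, pdx_pdy_eq_pdy_pdx hz, minimalSurfaceOperator]
  ring

theorem planarCurl_gradient_b (hz : ContDiffAt ℝ 2 z p) :
    planarCurl (fun q => -((Wel z q)⁻¹ * (1 + pdx z q ^ 2)))
      (fun q => -((Wel z q)⁻¹ * pdx z q * pdy z q)) p =
    (Wel z p)⁻¹ ^ 3 * minimalSurfaceOperator z p * -pdy z p := by
  have hzx := differentiableAt_pdx hz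
  have hzy := differentiableAt_pdy hz
  simp only [mul_assoc (Wel z _)⁻¹, ← mul_neg (Wel z _)⁻¹]
  rw [planarCurl_inv_Wel_mul hz ((hzx.fun_pow 2).const_add 1).fun_neg (hzx.fun_mul hzy).fun_neg,
    planarCurl, pdx_fun_neg, pdy_fun_neg, pdy_one_add_sq hzx, pdx_fun_mul hzx hzy,
    pdx_pdy_eq_pdy_pdx hz, minimalSurfaceOperator]
  ring

theorem planarCurl_gradient_c (hz : ContDiffAt ℝ 2 z p) :
    planarCurl (fun q => -((Wel z q)⁻¹ * pdy z q)) (fun q => (Wel z q)⁻¹ * pdx z q) p =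
    (Wel z p)⁻¹ ^ 3 * minimalSurfaceOperator z p := by
  have hzx := differentiableAt_pdx hz
  have hzy := differentiableAt_pdy hz
  simp only [← mul_neg (Wel z _)⁻¹]
  rw [planarCurl_inv_Wel_mul hz hzy.fun_neg hzx, planarCurl, pdy_fun_neg, minimalSurfaceOperator]
  ring

theorem minimalSurfaceOperator_eq_zero_of_potential {Ω : Set (ℝ × ℝ)} {c : ℝ × ℝ → ℝ}
    (hΩ : IsOpen Ω) (hz : ContDiffOn ℝ 2 z Ω) (hc : ContDiffOn ℝ 2 c Ω)
    (hgrad : ∀ q ∈ Ω, pdx c q = -((Wel z q)⁻¹ * pdy z q) ∧ pdy c q = (Wel z q)⁻¹ * pdx z q)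
    (hp : p ∈ Ω) : minimalSurfaceOperator z p = 0 := by
  have hΩp : Ω ∈ 𝓝 p := hΩ.mem_nhds hp
  have hcurl : (Wel z p)⁻¹ ^ 3 * minimalSurfaceOperator z p = 0 := by
    rw [← planarCurl_gradient_c (hz.contDiffAt hΩp),
      ← planarCurl_congr (eventually_of_mem hΩp fun q hq => (hgrad q hq).1)
        (eventually_of_mem hΩp fun q hq => (hgrad q hq).2),
      planarCurl_pdx_pdy (hc.contDiffAt hΩp)]
  exact (mul_eq_zero.1 hcurl).resolve_left (pow_ne_zero 3 (inv_ne_zero (Wel_pos z p).ne'))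

end MinimalSurface

/-- a nonparametric `C²` surface over a simply connected open set `Ω` is a
minimal surface iff the form `N ∧ dX` is a total differential `-dX*`, `X* = (a,b,c)`. -/
theorem minimal_surface_iff_total_differential
    (Ω : Set (ℝ × ℝ)) (hΩ : IsOpen Ω) (hsc : SimplyConnectedSpace Ω)
    (z : ℝ × ℝ → ℝ) (hz : ContDiffOn ℝ 2 z Ω) :
    (∀ p ∈ Ω,
      pdx (pdx z) p * (1 + (pdy z p) ^ 2) + pdy (pdy z) p * (1 + (pdx z p) ^ 2)
        - 2 * pdx z p * pdy z p * pdy (pdx z) p = 0) ↔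
    (∃ a b c : ℝ × ℝ → ℝ,
      ContDiffOn ℝ 2 a Ω ∧ ContDiffOn ℝ 2 b Ω ∧ ContDiffOn ℝ 2 c Ω ∧
      ∀ p ∈ Ω,
        pdx a p = (Wel z p)⁻¹ * pdx z p * pdy z p ∧
        pdy a p = (Wel z p)⁻¹ * (1 + (pdy z p) ^ 2) ∧
        pdx b p = -((Wel z p)⁻¹ * (1 + (pdx z p) ^ 2)) ∧
        pdy b p = -((Wel z p)⁻¹ * pdx z p * pdy z p) ∧
        pdx c p = -((Wel z p)⁻¹ * pdy z p) ∧
        pdy c p = (Wel z p)⁻¹ * pdx z p) := by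
  change (∀ p ∈ Ω, minimalSurfaceOperator z p = 0) ↔ _
  refine ⟨fun hmin => ?_, fun ⟨_, _, _, _, _, hc, hgrad⟩ _ hp =>
    minimalSurfaceOperator_eq_zero_of_potential hΩ hz hc (fun q hq => (hgrad q hq).2.2.2.2) hp⟩
  have hz' : ∀ p ∈ Ω, ContDiffAt ℝ 2 z p := fun p hp => hz.contDiffAt (hΩ.mem_nhds hp)
  have hzx : ContDiffOn ℝ 1 (pdx z) Ω := contDiffOn_pdx hΩ hz one_add_one_eq_two.le
  have hzy : ContDiffOn ℝ 1 (pdy z) Ω := contDiffOn_pdy hΩ hz one_add_one_eq_two.le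
  have hW : ContDiffOn ℝ 1 (fun q => (Wel z q)⁻¹) Ω := contDiffOn_inv_Wel hzx hzy
  obtain ⟨a, ha, hgrad_a⟩ := exists_contDiffOn_potential hΩ one_ne_zero ((hW.mul hzx).mul hzy)
    (hW.mul (contDiffOn_const.add (hzy.pow 2))) fun p hp => by
      rw [planarCurl_gradient_a (hz' p hp), hmin p hp, mul_zero, zero_mul]
  obtain ⟨b, hb, hgrad_b⟩ := exists_contDiffOn_potential hΩ one_ne_zero
    (hW.mul (contDiffOn_const.add (hzx.pow 2))).neg ((hW.mul hzx).mul hzy).neg fun p hp => by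
      rw [planarCurl_gradient_b (hz' p hp), hmin p hp, mul_zero, zero_mul]
  obtain ⟨c, hc, hgrad_c⟩ := exists_contDiffOn_potential hΩ one_ne_zero (hW.mul hzy).neg
    (hW.mul hzx) fun p hp => by rw [planarCurl_gradient_c (hz' p hp), hmin p hp, mul_zero]
  exact ⟨a, b, c, ha, hb, hc, fun p hp => ⟨(hgrad_a p hp).1, (hgrad_a p hp).2, (hgrad_b p hp).1,
    (hgrad_b p hp).2, hgrad_c p hp⟩⟩
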